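/- With notation as in the context, define for a ∈ R_k and μ ∈ ℚ with mμ ∈ ℤ the element a^M_{(μ)} ∈ B_α to be the coefficient of s^{−m(μ+1)} in Φ(a), and for a,b ∈ R_k and j ∈ ℤ define a_{(j)}b := 0 if j ≥ 0 and a_{(j)}b := (1/(−j−1)!)·T^{−j−1}(a)·b if j < 0. Suppose a, b ∈ R_k satisfy σ(a) = ζ^{r}·a and σ(b) = ζ^{s'}·b for integers r, s'. Then the twisted Borcherds identity holds: for all μ, ν ∈ ℚ with μ + r/m ∈ ℤ and ν + s'/m ∈ ℤ, and all l ∈ ℤ, one has, in B_α, Σ_{i≥0} C(μ,i)·(a_{(l+i)}b)^M_{(μ+ν−i)} = Σ_{i≥0} (−1)^i·C(l,i)·( a^M_{(l+μ−i)}·b^M_{(ν+i)} + (−1)^{l+1}·b^M_{(l+ν−i)}·a^M_{(μ+i)} ), where both sums have only finitely many nonzero terms. -/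

import Mathlib

open MvPolynomial

/-- Index set for the coordinate ring `B_α = ℂ[J^g 𝔸^k]` of the twisted jet
scheme: pairs `(i,e)` with `e ≡ α_i (mod m)`. -/
abbrev TwIdx (k m : ℕ) (α : Fin k → ℕ) : Type := {q : Fin k × ℕ // q.2 % m = α q.1}

/-- The generalized binomial coefficient `C(x,i) = x(x−1)⋯(x−i+1)/i!`. -/
noncomputable def genBinom (x : ℚ) (i : ℕ) : ℚ :=
  (∏ t ∈ Finset.range i, (x - t)) / (i.factorial : ℚ)

/-- The `j`-th product `a_{(j)} b` of the commutative vertex algebra attached to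
a commutative ℂ-algebra with derivation `T`. -/
noncomputable def nProd {R : Type*} [CommRing R] [Algebra ℂ R]
    (T : Derivation ℂ R R) (a : R) (j : ℤ) (b : R) : R :=
  if 0 ≤ j then 0
  else (((-j - 1).toNat.factorial : ℂ))⁻¹ • ((⇑T)^[(-j - 1).toNat] a) * b

/-- The twisted mode `a^M_{(μ)} ∈ B_α`: the coefficient of `s^{−m(μ+1)}` in
`Φ(a)`, recorded in terms of the integer `n = mμ` (so the coefficient of
`s^{-(n+m)}`). -/
noncomputable def twMode {k m : ℕ} {α : Fin k → ℕ}
    (Φ : MvPolynomial (Fin k × ℕ) ℂ →ₐ[ℂ] LaurentSeries (MvPolynomial (TwIdx k m α) ℂ))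
    (a : MvPolynomial (Fin k × ℕ) ℂ) (n : ℤ) : MvPolynomial (TwIdx k m α) ℂ :=
  (Φ a).coeff (-(n + m))

/-
Put `z = s ^ m`. Then `Φ` intertwines `T` with `d/dz` and `σ` with `s ↦ ζ s`, so if `σ a = ζ ^ r a`,
only powers `z ^ e` with `e ∈ r/m + ℤ` occur in `Φ a`, and `z ^ μ Φ(a)` has integral powers of `z`.

Multiply `Φ(a)(z) Φ(b)(w)` by `z ^ μ w ^ ν` and by the difference of the expansions of `(z - w) ^ l`
in nonnegative powers of `w` and of `z`, and take residues in `z` and `w`. Expanding `(z - w) ^ l`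
first gives the right-hand side. The difference of the expansions vanishes for `l = n ≥ 0`, while
for `l = -(n + 1)` it is the divided derivative `(1/n!) ∂_w ^ n` of the delta function, whose
coefficients are `C(N, n)`. In the latter case the left-hand side has the same coefficients, by the
Vandermonde identity `∑ C(μ, i) C(N - μ, n - i) = C(N, n)`.
-/

theorem finsum_comp_eq_of_support_subset_range {ι κ M : Type*} [AddCommMonoid M] {e : ι → κ}
    (he : Function.Injective e) {f : κ → M} (hf : Function.support f ⊆ Set.range e) :
    ∑ᶠ i, f (e i) = ∑ᶠ j, f j := by
  rw [← finsum_mem_range he, ← finsum_mem_univ f]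
  exact finsum_mem_inter_support_eq _ _ _ (by rw [Set.univ_inter, Set.inter_eq_right.2 hf])

section Binomial

open Function Finset

theorem ringChoose_eq_prod_div_factorial {K : Type*} [Field K] [CharZero K] (x : K) (n : ℕ) :
    Ring.choose x n = (∏ t ∈ range n, (x - t)) / n.factorial := by
  rw [Ring.choose_eq_smul, smul_eq_mul, ← Polynomial.aeval_eq_smeval, Polynomial.aeval_def,
    ← Polynomial.eval_map, algebraMap_int_eq, descPochhammer_map,
    descPochhammer_eval_eq_prod_range, inv_mul_eq_div]

theorem ratCast_genBinom (K : Type*) [Field K] [CharZero K] (x : ℚ) (n : ℕ) :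
    (genBinom x n : K) = Ring.choose (x : K) n := by
  rw [genBinom, ringChoose_eq_prod_div_factorial]
  push_cast
  rfl

/-- The coefficient of `x ^ j` in the expansion of `(1 - x) ^ l` in nonnegative powers of `x`. -/
def oneSubZPowCoeff (l : ℤ) : ℤ → ℤ
  | .ofNat i => (-1) ^ i * Ring.choose l i
  | .negSucc _ => 0

theorem oneSubZPowCoeff_natCast (l : ℤ) (i : ℕ) :
    oneSubZPowCoeff l i = (-1) ^ i * Ring.choose l i := rfl

theorem oneSubZPowCoeff_of_neg (l : ℤ) {j : ℤ} (hj : j < 0) : oneSubZPowCoeff l j = 0 := by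
  obtain ⟨i, rfl⟩ := Int.eq_negSucc_of_lt_zero hj
  rfl

theorem oneSubZPowCoeff_natCast_of_lt {n : ℕ} {j : ℤ} (hj : n < j) :
    oneSubZPowCoeff n j = 0 := by
  lift j to ℕ using by lia
  rw [oneSubZPowCoeff_natCast, Ring.choose_natCast, Nat.choose_eq_zero_of_lt (mod_cast hj),
    Nat.cast_zero, mul_zero]

theorem oneSubZPowCoeff_natCast_sub (n : ℕ) (j : ℤ) :
    oneSubZPowCoeff n (n - j) = (-1) ^ n * oneSubZPowCoeff n j := by
  rcases lt_or_ge j 0 with hj | hj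
  · rw [oneSubZPowCoeff_of_neg _ hj, oneSubZPowCoeff_natCast_of_lt (by lia), mul_zero]
  rcases lt_or_ge (n : ℤ) j with hn | hn
  · rw [oneSubZPowCoeff_natCast_of_lt hn, oneSubZPowCoeff_of_neg _ (by lia), mul_zero]
  lift j to ℕ using hj
  obtain ⟨i, rfl⟩ := Nat.exists_eq_add_of_le (Int.ofNat_le.1 hn)
  rw [show ((j + i : ℕ) : ℤ) - j = i by push_cast; ring, oneSubZPowCoeff_natCast,
    oneSubZPowCoeff_natCast, Ring.choose_natCast, Ring.choose_natCast, Nat.choose_symm_add,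
    ← mul_assoc, ← pow_add, show j + i + j = i + 2 * j by ring, pow_add, pow_mul, neg_one_sq,
    one_pow, mul_one]

theorem neg_one_pow_mul_genBinom (l : ℤ) (i : ℕ) :
    (-1 : ℂ) ^ i * ((genBinom (l : ℚ) i : ℚ) : ℂ) = (oneSubZPowCoeff l i : ℤ) := by
  rw [ratCast_genBinom, oneSubZPowCoeff_natCast, Rat.cast_intCast]
  push_cast
  rw [← eq_intCast (Int.castRingHom ℂ) (Ring.choose l i), Ring.map_choose, eq_intCast]

theorem ringChoose_neg_succ (i n : ℕ) :
    Ring.choose (-(i + 1) : ℤ) n = (-1) ^ n * (n + i).choose n := by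
  rw [Ring.choose_neg, show (i : ℤ) + 1 + n - 1 = (n + i : ℕ) by push_cast; ring,
    Ring.choose_natCast, Units.smul_def, Int.coe_negOnePow_natCast, smul_eq_mul]

theorem oneSubZPowCoeff_neg_succ (n i : ℕ) :
    oneSubZPowCoeff (-(n + 1)) i = (n + i).choose n := by
  rw [oneSubZPowCoeff_natCast, ringChoose_neg_succ, ← mul_assoc, ← mul_pow, neg_one_mul, neg_neg,
    one_pow, one_mul, add_comm, Nat.choose_symm_add]

/-- The coefficient of `z ^ (-N - 1) * w ^ (N + l + 1)` in the difference between the expansions of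
`(z - w) ^ l` in nonnegative powers of `w` and in nonnegative powers of `z`. -/
def expansionDiffCoeff (l N : ℤ) : ℤ :=
  oneSubZPowCoeff l (N + l + 1) + (l + 1).negOnePow * oneSubZPowCoeff l (-N - 1)

theorem expansionDiffCoeff_natCast (n : ℕ) (N : ℤ) : expansionDiffCoeff n N = 0 := by
  rw [expansionDiffCoeff, show N + n + 1 = n - (-N - 1) by ring, oneSubZPowCoeff_natCast_sub,
    Int.negOnePow_succ, Units.val_neg, Int.coe_negOnePow_natCast]
  ring

theorem expansionDiffCoeff_neg_succ (n : ℕ) (N : ℤ) :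
    expansionDiffCoeff (-(n + 1)) N = Ring.choose N n := by
  rw [expansionDiffCoeff, show N + -((n : ℤ) + 1) + 1 = N - n by ring,
    show -((n : ℤ) + 1) + 1 = -n by ring, Int.negOnePow_neg, Int.coe_negOnePow_natCast]
  rcases lt_or_ge N 0 with hN | hN
  · obtain ⟨i, rfl⟩ := Int.eq_negSucc_of_lt_zero hN
    rw [oneSubZPowCoeff_of_neg _ (by lia), zero_add, Int.negSucc_eq,
      show -(-((i : ℤ) + 1)) - 1 = i by ring, oneSubZPowCoeff_neg_succ, ringChoose_neg_succ]
  rw [oneSubZPowCoeff_of_neg _ (by lia : -N - 1 < 0), mul_zero, add_zero]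
  lift N to ℕ using hN
  rw [Ring.choose_natCast]
  rcases lt_or_ge N n with hn | hn
  · rw [oneSubZPowCoeff_of_neg _ (by lia), Nat.choose_eq_zero_of_lt hn, Nat.cast_zero]
  · rw [← Nat.cast_sub hn, oneSubZPowCoeff_neg_succ, Nat.add_sub_cancel' hn]

theorem finsum_oneSubZPowCoeff_smul {M : Type*} [AddCommGroup M] (l : ℤ) (e : ℤ ≃ ℤ)
    (F : ℤ → M) :
    ∑ᶠ i : ℕ, oneSubZPowCoeff l i • F (e i) = ∑ᶠ N, oneSubZPowCoeff l (e.symm N) • F N := by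
  have hsupp : support (fun j ↦ oneSubZPowCoeff l j • F (e j)) ⊆ Set.range ((↑) : ℕ → ℤ) := by
    intro j hj
    have hj₀ : 0 ≤ j := by
      by_contra! hneg
      exact hj (by simp only [oneSubZPowCoeff_of_neg l hneg, zero_smul])
    exact ⟨j.toNat, Int.toNat_of_nonneg hj₀⟩
  rw [finsum_comp_eq_of_support_subset_range Nat.cast_injective hsupp,
    ← finsum_comp_equiv e (f := fun N ↦ oneSubZPowCoeff l (e.symm N) • F N)]
  simp only [e.symm_apply_apply]

theorem hasFiniteSupport_sub_add_smul {M : Type*} [AddCommGroup M] (l c : ℤ) {F : ℤ → M}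
    (hF : F.HasFiniteSupport) :
    (fun i : ℕ ↦ F (i - (l + 1)) + c • F (-1 - i)).HasFiniteSupport := by
  have h₁ : (fun i : ℕ ↦ F (i - (l + 1))).HasFiniteSupport :=
    hF.comp_of_injective ((Equiv.subRight (l + 1)).injective.comp Nat.cast_injective)
  have h₂ : (fun i : ℕ ↦ F (-1 - i)).HasFiniteSupport :=
    hF.comp_of_injective ((Equiv.subLeft (-1)).injective.comp Nat.cast_injective)
  exact h₁.fun_add (h₂.fun_smul_right _)

theorem finsum_oneSubZPowCoeff_smul_add {M : Type*} [AddCommGroup M] (l : ℤ) {F : ℤ → M}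
    (hF : F.HasFiniteSupport) :
    ∑ᶠ i : ℕ, oneSubZPowCoeff l i • (F (i - (l + 1)) + ((l + 1).negOnePow : ℤ) • F (-1 - i)) =
      ∑ᶠ N, expansionDiffCoeff l N • F N := by
  let e₁ : ℤ ≃ ℤ := Equiv.subRight (l + 1)
  let e₂ : ℤ ≃ ℤ := Equiv.subLeft (-1)
  let ε : ℤ := (l + 1).negOnePow
  have he (e : ℤ ≃ ℤ) : (fun i : ℕ ↦ F (e i)).HasFiniteSupport :=
    hF.comp_of_injective (e.injective.comp Nat.cast_injective)
  calc ∑ᶠ i : ℕ, oneSubZPowCoeff l i • (F (i - (l + 1)) + ε • F (-1 - i))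
      = ∑ᶠ i : ℕ, oneSubZPowCoeff l i • F (e₁ i) +
          ∑ᶠ i : ℕ, oneSubZPowCoeff l i • ε • F (e₂ i) := by
        simp only [smul_add]
        exact finsum_add_distrib ((he e₁).fun_smul_right _)
          (((he e₂).fun_smul_right _).fun_smul_right _)
    _ = ∑ᶠ N, oneSubZPowCoeff l (e₁.symm N) • F N +
          ∑ᶠ N, oneSubZPowCoeff l (e₂.symm N) • ε • F N := by
        rw [finsum_oneSubZPowCoeff_smul, finsum_oneSubZPowCoeff_smul l e₂ (fun N ↦ ε • F N)]
    _ = ∑ᶠ N, expansionDiffCoeff l N • F N := by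
        rw [← finsum_add_distrib (hF.fun_smul_right _)
          ((hF.fun_smul_right _).fun_smul_right _)]
        refine finsum_congr fun N ↦ ?_
        have h₁ : e₁.symm N = N + l + 1 := (add_assoc N l 1).symm
        have h₂ : e₂.symm N = -N - 1 := rfl
        rw [h₁, h₂, smul_smul, ← add_smul, mul_comm _ ε, expansionDiffCoeff]

end Binomial

section LaurentSeries

open Function Finset

theorem hasFiniteSupport_coeff_mul_coeff {S : Type*} [Semiring S] (A B : LaurentSeries S) (e : ℤ) :
    (fun p ↦ A.coeff p * B.coeff (e - p)).HasFiniteSupport := by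
  refine (Set.finite_Icc A.order (e - B.order)).subset fun p hp ↦ ⟨?_, ?_⟩
  · by_contra! h
    exact hp (by simp only [HahnSeries.coeff_eq_zero_of_lt_order h, zero_mul])
  · by_contra! h
    have hB : B.coeff (e - p) = 0 := HahnSeries.coeff_eq_zero_of_lt_order (by lia)
    exact hp (by simp only [hB, mul_zero])

theorem coeff_mul_eq_finsum {S : Type*} [Semiring S] (A B : LaurentSeries S) (e : ℤ) :
    (A * B).coeff e = ∑ᶠ p, A.coeff p * B.coeff (e - p) := by
  classical
  have hfst : Set.InjOn Prod.fst
      (antidiagonal A.isPWO_support B.isPWO_support e : Set (ℤ × ℤ)) := by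
    intro p hp q hq hpq
    rw [mem_coe, Finset.mem_antidiagonal] at hp hq
    exact Prod.ext hpq (by lia)
  have hsupp : support (fun p ↦ A.coeff p * B.coeff (e - p)) ⊆
      (antidiagonal A.isPWO_support B.isPWO_support e).image Prod.fst := by
    intro p hp
    simp only [mem_coe, mem_image, Finset.mem_antidiagonal]
    exact ⟨(p, e - p), ⟨left_ne_zero_of_mul hp, right_ne_zero_of_mul hp, by ring⟩, rfl⟩
  rw [HahnSeries.coeff_mul, finsum_eq_sum_of_support_subset _ hsupp, sum_image hfst]
  refine sum_congr rfl fun p hp ↦ ?_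
  rw [← (Finset.mem_antidiagonal.1 hp).2.2, add_sub_cancel_left]

section Algebra

variable {K S : Type*} [CommRing K] [CommRing S] [Algebra K S]

theorem algebraMap_eq_single (c : K) :
    algebraMap K (LaurentSeries S) c = HahnSeries.single 0 (algebraMap K S c) := by
  rw [HahnSeries.algebraMap_apply', PowerSeries.algebraMap_apply, HahnSeries.ofPowerSeries_C,
    HahnSeries.C_apply]

theorem coeff_map_smul {R : Type*} [CommRing R] [Algebra K R] (Φ : R →ₐ[K] LaurentSeries S)
    (c : K) (a : R) (e : ℤ) : (Φ (c • a)).coeff e = c • (Φ a).coeff e := by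
  rw [Algebra.smul_def, map_mul, AlgHom.commutes, algebraMap_eq_single,
    HahnSeries.coeff_single_zero_mul, Algebra.smul_def]

/-- The substitution `s ↦ ζ s` in Laurent series in `s`, for a unit `ζ`. -/
def scaleVar (ζ : Kˣ) : LaurentSeries S →+* LaurentSeries S where
  toFun A := ⟨fun e ↦ ζ ^ e • A.coeff e, A.isPWO_support.mono (support_smul_subset_right _ _)⟩
  map_one' := by
    ext e
    rcases eq_or_ne e 0 with rfl | he
    · simp
    · simp [HahnSeries.coeff_one, he]
  map_mul' A B := by
    ext e
    simp only [coeff_mul_eq_finsum]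
    rw [smul_finsum' _ (hasFiniteSupport_coeff_mul_coeff A B e)]
    refine finsum_congr fun p ↦ ?_
    rw [smul_mul_smul_comm, ← zpow_add, add_sub_cancel]
  map_zero' := by ext; simp
  map_add' A B := by ext; simp

theorem coeff_scaleVar (ζ : Kˣ) (A : LaurentSeries S) (e : ℤ) :
    (scaleVar ζ A).coeff e = ζ ^ e • A.coeff e := rfl

theorem scaleVar_algebraMap (ζ : Kˣ) (c : K) :
    scaleVar ζ (algebraMap K (LaurentSeries S) c) = algebraMap K (LaurentSeries S) c := by
  ext e
  rw [coeff_scaleVar, algebraMap_eq_single]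
  rcases eq_or_ne e 0 with rfl | he
  · simp
  · rw [HahnSeries.coeff_single_of_ne he, smul_zero]

end Algebra

section Derivative

variable (K : Type*) {S : Type*} [Field K] [CommRing S] [Algebra K S] (m : ℕ)

/-- The derivation `d/dz` of Laurent series in `s`, where `z = s ^ m`; that is,
`(1/m) s ^ (1 - m) d/ds`. -/
def zDeriv : LaurentSeries S →ₗ[K] LaurentSeries S where
  toFun A := HahnSeries.ofSuppBddBelow (fun e ↦ (((e + m : ℤ) : K) / m) • A.coeff (e + m)) <| by
    refine ⟨A.order - m, fun e he ↦ ?_⟩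
    contrapose! he
    rw [notMem_support, HahnSeries.coeff_eq_zero_of_lt_order (lt_sub_iff_add_lt.1 he), smul_zero]
  map_add' A B := HahnSeries.ext (funext fun _ ↦ smul_add _ _ _)
  map_smul' c A := HahnSeries.ext (funext fun _ ↦ smul_comm _ _ _)

theorem coeff_zDeriv (A : LaurentSeries S) (e : ℤ) :
    (zDeriv K m A).coeff e = (((e + m : ℤ) : K) / m) • A.coeff (e + m) := rfl

theorem zDeriv_algebraMap (c : K) : zDeriv K m (algebraMap K (LaurentSeries S) c) = 0 := by
  ext e
  rw [coeff_zDeriv, algebraMap_eq_single, HahnSeries.coeff_zero]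
  rcases eq_or_ne (e + m) 0 with he | he
  · rw [he, Int.cast_zero, zero_div, zero_smul]
  · rw [HahnSeries.coeff_single_of_ne he, smul_zero]

theorem zDeriv_mul (A B : LaurentSeries S) :
    zDeriv K m (A * B) = zDeriv K m A * B + A * zDeriv K m B := by
  ext e
  have hAB := hasFiniteSupport_coeff_mul_coeff A B (e + m)
  have hleft : (zDeriv K m A * B).coeff e =
      ∑ᶠ p : ℤ, ((p : K) / m) • (A.coeff p * B.coeff (e + m - p)) := by
    rw [coeff_mul_eq_finsum, ← finsum_comp_equiv (Equiv.addRight (m : ℤ))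
      (f := fun p : ℤ ↦ ((p : K) / m) • (A.coeff p * B.coeff (e + m - p)))]
    refine finsum_congr fun p ↦ ?_
    rw [Equiv.coe_addRight, coeff_zDeriv, smul_mul_assoc, add_sub_add_right_eq_sub]
  have hright : (A * zDeriv K m B).coeff e =
      ∑ᶠ p : ℤ, (((e + m - p : ℤ) : K) / m) • (A.coeff p * B.coeff (e + m - p)) := by
    rw [coeff_mul_eq_finsum]
    refine finsum_congr fun p ↦ ?_
    rw [coeff_zDeriv, mul_smul_comm, sub_add_eq_add_sub]
  rw [HahnSeries.coeff_add, hleft, hright,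
    ← finsum_add_distrib (hAB.fun_smul_right _) (hAB.fun_smul_right _), coeff_zDeriv,
    coeff_mul_eq_finsum, smul_finsum' _ hAB]
  refine finsum_congr fun p ↦ ?_
  rw [← add_smul, ← add_div, ← Int.cast_add, add_sub_cancel]

variable {m}

theorem coeff_iterate_zDeriv (hm : (m : K) ≠ 0) (A : LaurentSeries S) (j : ℕ) (e : ℤ) :
    ((zDeriv K m)^[j] A).coeff e =
      (∏ t ∈ range j, (((e + m * j : ℤ) : K) / m - t)) • A.coeff (e + m * j) := by
  induction j generalizing e with
  | zero => simp
  | succ j ih =>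
    have he : e + m + (m : ℤ) * j = e + m * (j + 1 : ℕ) := by push_cast; ring
    have hfactor : ((e + m : ℤ) : K) / m = ((e + m * (j + 1 : ℕ) : ℤ) : K) / m - j := by
      push_cast
      field_simp
      ring
    rw [iterate_succ_apply', coeff_zDeriv, ih, smul_smul, he, hfactor, prod_range_succ, mul_comm]

theorem inv_factorial_smul_coeff_iterate_zDeriv [CharZero K] (hm : (m : K) ≠ 0)
    (A : LaurentSeries S) (j : ℕ) (e : ℤ) :
    (j.factorial : K)⁻¹ • ((zDeriv K m)^[j] A).coeff e =
      Ring.choose (((e + m * j : ℤ) : K) / m) j • A.coeff (e + m * j) := by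
  rw [coeff_iterate_zDeriv K hm, smul_smul, ringChoose_eq_prod_div_factorial, inv_mul_eq_div]

end Derivative

end LaurentSeries

section Borcherds

open Function Finset

variable {S : Type*} [CommRing S] {m : ℕ}

/-- The coefficient of `s ^ (-n - m)`, which for `z = s ^ m` is that of `z ^ (-n / m - 1)`: the mode
of index `n / m`. -/
def zMode (m : ℕ) (A : LaurentSeries S) (n : ℤ) : S :=
  A.coeff (-(n + m))

/-- With `μ = M / m` and `ν = w / m`, the product of the mode of `A` of index `μ - N - 1` and the
mode of `B` of index `ν + l + 1 + N`. -/
def zModeMul (m : ℕ) (A B : LaurentSeries S) (M w l N : ℤ) : S :=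
  zMode m A (M - m * (N + 1)) * zMode m B (w + m * (l + 1 + N))

theorem zModeMul_eq_coeff_mul_coeff (A B : LaurentSeries S) (M w l N : ℤ) :
    zModeMul m A B M w l N =
      A.coeff (m * N - M) * B.coeff (-(m * l + M + w + 2 * m) - (m * N - M)) := by
  rw [zModeMul, zMode, zMode]
  congr 2 <;> ring

theorem injective_natCast_mul_sub (hm : m ≠ 0) (M : ℤ) : Injective fun N : ℤ ↦ m * N - M :=
  fun _ _ h ↦ mul_left_cancel₀ (Nat.cast_ne_zero.2 hm) (sub_left_injective h)

theorem hasFiniteSupport_zModeMul (hm : m ≠ 0) (A B : LaurentSeries S) (M w l : ℤ) :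
    (zModeMul m A B M w l).HasFiniteSupport := by
  rw [funext (zModeMul_eq_coeff_mul_coeff A B M w l)]
  exact (hasFiniteSupport_coeff_mul_coeff A B _).fun_comp_of_injective
    (injective_natCast_mul_sub hm M)

theorem zMode_mul_add_smul_eq_zModeMul (A B : LaurentSeries S) (M w l c i : ℤ) :
    zMode m A (m * l + M - m * i) * zMode m B (w + m * i) +
        c • (zMode m B (m * l + w - m * i) * zMode m A (M + m * i)) =
      zModeMul m A B M w l (i - (l + 1)) + c • zModeMul m A B M w l (-1 - i) := by
  rw [zModeMul, zModeMul, mul_comm (zMode m B _) (zMode m A _)]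
  ring_nf

variable [Algebra ℂ S] {R : Type*} [CommRing R] [Algebra ℂ R]

theorem zMode_map_nProd_of_nonneg (T : Derivation ℂ R R) (Φ : R →ₐ[ℂ] LaurentSeries S) (a b : R)
    {j : ℤ} (hj : 0 ≤ j) (N : ℤ) : zMode m (Φ (nProd T a j b)) N = 0 := by
  rw [nProd, if_pos hj, map_zero, zMode, HahnSeries.coeff_zero]

theorem nProd_neg_succ (T : Derivation ℂ R R) (a b : R) (j : ℕ) :
    nProd T a (-(j + 1)) b = ((j.factorial : ℂ)⁻¹ • T^[j] a) * b := by
  rw [nProd, if_neg (by lia), show (-(-((j : ℤ) + 1)) - 1).toNat = j by lia]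

theorem coeff_map_nProd_neg_succ {T : Derivation ℂ R R} {Φ : R →ₐ[ℂ] LaurentSeries S}
    (hm : m ≠ 0) (hΦ : Semiconj Φ T (zDeriv ℂ m)) (a b : R) (j : ℕ) (e : ℤ) :
    (Φ (nProd T a (-(j + 1)) b)).coeff (e - m * j) =
      ∑ᶠ p : ℤ, Ring.choose ((p : ℂ) / m) j • ((Φ a).coeff p * (Φ b).coeff (e - p)) := by
  rw [nProd_neg_succ, map_mul, coeff_mul_eq_finsum, ← finsum_comp_equiv (Equiv.addRight (m * j : ℤ))
    (f := fun p : ℤ ↦ Ring.choose ((p : ℂ) / m) j • ((Φ a).coeff p * (Φ b).coeff (e - p)))]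
  refine finsum_congr fun p ↦ ?_
  rw [coeff_map_smul, hΦ.iterate_right,
    inv_factorial_smul_coeff_iterate_zDeriv ℂ (Nat.cast_ne_zero.2 hm), smul_mul_assoc,
    Equiv.coe_addRight, sub_sub, add_comm (m * j : ℤ)]

theorem sum_antidiagonal_choose_smul_coeff_map_nProd {T : Derivation ℂ R R}
    {Φ : R →ₐ[ℂ] LaurentSeries S} (hm : m ≠ 0) (hΦ : Semiconj Φ T (zDeriv ℂ m)) (a b : R)
    (x : ℂ) (n : ℕ) (e : ℤ) :
    ∑ ij ∈ antidiagonal n,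
        Ring.choose x ij.1 • (Φ (nProd T a (-(ij.2 + 1)) b)).coeff (e - m * ij.2) =
      ∑ᶠ p : ℤ, Ring.choose (x + p / m) n • ((Φ a).coeff p * (Φ b).coeff (e - p)) := by
  have hfin := hasFiniteSupport_coeff_mul_coeff (Φ a) (Φ b) e
  simp only [coeff_map_nProd_neg_succ hm hΦ, smul_finsum' _ (hfin.fun_smul_right _)]
  rw [← finsum_sum_comm _ _ fun _ _ ↦ (hfin.fun_smul_right _).fun_smul_right _]
  refine finsum_congr fun p ↦ ?_
  simp only [smul_smul]
  rw [← sum_smul, ← Ring.add_choose_eq n (Commute.all x _)]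

theorem finsum_smul_zMode_nProd_neg_succ (T : Derivation ℂ R R) (Φ : R →ₐ[ℂ] LaurentSeries S)
    (a b : R) (c : ℕ → ℂ) (n : ℕ) (N : ℤ) :
    ∑ᶠ i : ℕ, c i • zMode m (Φ (nProd T a (-(n + 1) + i) b)) (N - m * i) =
      ∑ ij ∈ antidiagonal n,
        c ij.1 • zMode m (Φ (nProd T a (-(ij.2 + 1)) b)) (N - m * n + m * ij.2) := by
  have hsupp : support (fun i : ℕ ↦ c i • zMode m (Φ (nProd T a (-(n + 1) + i) b)) (N - m * i)) ⊆
      range n.succ := by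
    intro i hi
    rw [mem_coe, mem_range, Nat.lt_succ_iff]
    by_contra! h
    exact hi (by
      simp only [zMode_map_nProd_of_nonneg T Φ a b (by lia : 0 ≤ -((n : ℤ) + 1) + i), smul_zero])
  rw [finsum_eq_sum_of_support_subset _ hsupp, Nat.sum_antidiagonal_eq_sum_range_succ fun i j ↦
    c i • zMode m (Φ (nProd T a (-(j + 1)) b)) (N - m * n + m * j)]
  refine sum_congr rfl fun i hi ↦ ?_
  obtain ⟨j, rfl⟩ := Nat.exists_eq_add_of_le (mem_range_succ_iff.1 hi)
  have hj : -(((i + j : ℕ) : ℤ) + 1) + i = -(j + 1) := by push_cast; ring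
  have hN : N - m * i = N - m * (i + j : ℕ) + m * j := by push_cast; ring
  rw [Nat.add_sub_cancel_left, hj, hN]

theorem finsum_choose_smul_zMode_nProd_neg_succ {T : Derivation ℂ R R}
    {Φ : R →ₐ[ℂ] LaurentSeries S} (hm : m ≠ 0) (hΦ : Semiconj Φ T (zDeriv ℂ m)) (a b : R)
    (x : ℂ) (n : ℕ) (N : ℤ) :
    ∑ᶠ i : ℕ, Ring.choose x i • zMode m (Φ (nProd T a (-(n + 1) + i) b)) (N - m * i) =
      ∑ᶠ p : ℤ, Ring.choose (x + p / m) n •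
        ((Φ a).coeff p * (Φ b).coeff (-(N - m * n + m) - p)) := by
  rw [finsum_smul_zMode_nProd_neg_succ, ← sum_antidiagonal_choose_smul_coeff_map_nProd hm hΦ]
  refine sum_congr rfl fun ij _ ↦ ?_
  rw [zMode, add_right_comm, neg_add _ (m * ij.2 : ℤ), ← sub_eq_add_neg]

theorem hasFiniteSupport_zMode_nProd (T : Derivation ℂ R R) (Φ : R →ₐ[ℂ] LaurentSeries S)
    (a b : R) (l N : ℤ) :
    (fun i : ℕ ↦ zMode m (Φ (nProd T a (l + i) b)) (N - m * i)).HasFiniteSupport := by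
  refine (Set.finite_lt_nat (-l).toNat).subset fun i hi ↦ ?_
  by_contra h
  rw [Set.mem_ofPred_eq] at h
  exact hi (zMode_map_nProd_of_nonneg T Φ a b (by lia) _)

theorem finsum_choose_smul_coeff_mul_coeff (hm : m ≠ 0) {A : LaurentSeries S}
    (B : LaurentSeries S) {M : ℤ} (hM : ∀ e, A.coeff e ≠ 0 → (m : ℤ) ∣ e + M) (n : ℕ) (e : ℤ) :
    ∑ᶠ p : ℤ, Ring.choose ((M : ℂ) / m + p / m) n • (A.coeff p * B.coeff (e - p)) =
      ∑ᶠ N : ℤ, expansionDiffCoeff (-(n + 1)) N •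
        (A.coeff (m * N - M) * B.coeff (e - (m * N - M))) := by
  have hsupp : support (fun p : ℤ ↦ Ring.choose ((M : ℂ) / m + p / m) n •
      (A.coeff p * B.coeff (e - p))) ⊆ Set.range fun N : ℤ ↦ m * N - M := by
    intro p hp
    obtain ⟨N, hN⟩ := hM p (left_ne_zero_of_mul (right_ne_zero_of_smul hp))
    exact ⟨N, sub_eq_of_eq_add hN.symm⟩
  rw [← finsum_comp_eq_of_support_subset_range (injective_natCast_mul_sub hm M) hsupp]
  refine finsum_congr fun N ↦ ?_
  have hN : (M : ℂ) / m + (m * N - M : ℤ) / m = N := by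
    push_cast
    field_simp
    ring
  have hchoose : Ring.choose (N : ℂ) n = (Ring.choose N n : ℤ) :=
    (Ring.map_choose (Int.castRingHom ℂ) N n).symm
  rw [hN, hchoose, Int.cast_smul_eq_zsmul, expansionDiffCoeff_neg_succ]

theorem finsum_choose_smul_zMode_nProd {T : Derivation ℂ R R} {Φ : R →ₐ[ℂ] LaurentSeries S}
    (hm : m ≠ 0) (hΦ : Semiconj Φ T (zDeriv ℂ m)) (a b : R) {M : ℤ}
    (hM : ∀ e, (Φ a).coeff e ≠ 0 → (m : ℤ) ∣ e + M) (w l : ℤ) :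
    ∑ᶠ i : ℕ, Ring.choose ((M : ℂ) / m) i • zMode m (Φ (nProd T a (l + i) b)) (M + w - m * i) =
      ∑ᶠ N : ℤ, expansionDiffCoeff l N • zModeMul m (Φ a) (Φ b) M w l N := by
  obtain ⟨n, rfl | rfl⟩ : ∃ n : ℕ, l = n ∨ l = -(n + 1) := by
    rcases le_or_gt 0 l with hl | hl
    · exact ⟨l.toNat, .inl (Int.toNat_of_nonneg hl).symm⟩
    · exact ⟨(-l - 1).toNat, .inr (by lia)⟩
  · have hleft (i : ℕ) : zMode m (Φ (nProd T a (n + i) b)) (M + w - m * i) = 0 :=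
      zMode_map_nProd_of_nonneg T Φ a b (by positivity) _
    simp only [hleft, expansionDiffCoeff_natCast, zero_smul, smul_zero, finsum_zero]
  · have hw : -(m * -((n : ℤ) + 1) + M + w + 2 * m) = -(M + w - m * n + m) := by ring
    simp only [zModeMul_eq_coeff_mul_coeff, hw]
    rw [finsum_choose_smul_zMode_nProd_neg_succ hm hΦ]
    exact finsum_choose_smul_coeff_mul_coeff hm (Φ b) hM n _

theorem twisted_borcherds_identity_for_twisted_jets_general (hm : m ≠ 0) {T : Derivation ℂ R R}
    {Φ : R →ₐ[ℂ] LaurentSeries S} (hΦ : Semiconj Φ T (zDeriv ℂ m)) (a b : R) {M : ℤ}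
    (hM : ∀ e, (Φ a).coeff e ≠ 0 → (m : ℤ) ∣ e + M) (w l : ℤ) :
    (support fun i : ℕ ↦ ((genBinom ((M : ℚ) / m) i : ℚ) : ℂ) •
      zMode m (Φ (nProd T a (l + i) b)) (M + w - m * i)).Finite ∧
    (support fun i : ℕ ↦ ((-1 : ℂ) ^ i * ((genBinom (l : ℚ) i : ℚ) : ℂ)) •
      (zMode m (Φ a) (m * l + M - m * i) * zMode m (Φ b) (w + m * i) +
        (-1 : ℂ) ^ (l + 1) •
          (zMode m (Φ b) (m * l + w - m * i) * zMode m (Φ a) (M + m * i)))).Finite ∧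
    ∑ᶠ i : ℕ, ((genBinom ((M : ℚ) / m) i : ℚ) : ℂ) •
        zMode m (Φ (nProd T a (l + i) b)) (M + w - m * i) =
      ∑ᶠ i : ℕ, ((-1 : ℂ) ^ i * ((genBinom (l : ℚ) i : ℚ) : ℂ)) •
        (zMode m (Φ a) (m * l + M - m * i) * zMode m (Φ b) (w + m * i) +
          (-1 : ℂ) ^ (l + 1) •
            (zMode m (Φ b) (m * l + w - m * i) * zMode m (Φ a) (M + m * i))) := by
  have hgenBinom (i : ℕ) :
      ((genBinom ((M : ℚ) / m) i : ℚ) : ℂ) = Ring.choose ((M : ℂ) / m) i := by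
    rw [ratCast_genBinom, Rat.cast_div, Rat.cast_intCast, Rat.cast_natCast]
  have hfin := hasFiniteSupport_zModeMul hm (Φ a) (Φ b) M w l
  simp only [hgenBinom, neg_one_pow_mul_genBinom, ← Int.cast_negOnePow, Int.cast_smul_eq_zsmul,
    zMode_mul_add_smul_eq_zModeMul]
  refine ⟨(hasFiniteSupport_zMode_nProd T Φ a b l (M + w)).fun_smul_right _,
    (hasFiniteSupport_sub_add_smul l _ hfin).fun_smul_right _, ?_⟩
  rw [finsum_choose_smul_zMode_nProd hm hΦ a b hM, finsum_oneSubZPowCoeff_smul_add l hfin]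

end Borcherds

section Jets

open Function

theorem zpow_eq_zpow_iff_dvd {G : Type*} [CommGroup G] {m : ℕ} {ζ : G} (hζ : IsPrimitiveRoot ζ m)
    {e r : ℤ} : ζ ^ e = ζ ^ r ↔ (m : ℤ) ∣ e - r := by
  rw [← hζ.zpow_eq_one_iff_dvd, zpow_sub, mul_inv_eq_one]

theorem map_eq_scaleVar_map_of_forall_X {K ι S : Type*} [CommRing K] [CommRing S] [Algebra K S]
    {ζ : Kˣ} {σ : MvPolynomial ι K →ₐ[K] MvPolynomial ι K}
    {Φ : MvPolynomial ι K →ₐ[K] LaurentSeries S}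
    (hX : ∀ i, Φ (σ (X i)) = scaleVar ζ (Φ (X i))) (a : MvPolynomial ι K) :
    Φ (σ a) = scaleVar ζ (Φ a) := by
  refine hom_eq_hom ((Φ : MvPolynomial ι K →+* LaurentSeries S).comp (σ : _ →+* _))
    ((scaleVar ζ).comp (Φ : MvPolynomial ι K →+* LaurentSeries S)) ?_ hX a
  ext c : 1
  simp only [RingHom.comp_apply, RingHom.coe_coe, ← algebraMap_eq, AlgHom.commutes,
    scaleVar_algebraMap]

variable {K ι S : Type*} [Field K] [CommRing S] [Algebra K S]

theorem semiconj_zDeriv_of_forall_X {m : ℕ} {T : Derivation K (MvPolynomial ι K) (MvPolynomial ι K)}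
    {Φ : MvPolynomial ι K →ₐ[K] LaurentSeries S}
    (hX : ∀ i, Φ (T (X i)) = zDeriv K m (Φ (X i))) : Semiconj Φ T (zDeriv K m) := by
  intro a
  induction a using MvPolynomial.induction_on with
  | C c =>
    rw [← algebraMap_eq, T.map_algebraMap, map_zero, AlgHom.commutes, zDeriv_algebraMap]
  | add p q hp hq => simp only [map_add, hp, hq]
  | mul_X p i hp =>
    rw [T.leibniz, smul_eq_mul, smul_eq_mul, map_add, map_mul, map_mul, map_mul, hX, hp,
      zDeriv_mul, mul_comm (Φ (X i)), add_comm]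

theorem dvd_sub_of_coeff_ne_zero {m : ℕ} {ζ : Kˣ} (hζ : IsPrimitiveRoot ζ m)
    {A : LaurentSeries S} {r : ℤ} (hA : ∀ e, (scaleVar ζ A).coeff e = ζ ^ r • A.coeff e) {e : ℤ}
    (he : A.coeff e ≠ 0) : (m : ℤ) ∣ e - r :=
  (zpow_eq_zpow_iff_dvd hζ).1 (Units.ext (smul_left_injective K he (hA e)))

/-- The formula defining `Φ` on the generators of `ℂ[J𝔸^k]`: `x_{i,ℓ}` is sent to the divided power
`(1/ℓ!) (d/dz)^ℓ` of the series `∑ y_{i,e} s ^ e` over `e ≥ 0` with `e ≡ α_i (mod m)`, where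
`z = s ^ m`. -/
def IsTwistedJetExpansion {k m : ℕ} {α : Fin k → ℕ}
    (Φ : MvPolynomial (Fin k × ℕ) ℂ →ₐ[ℂ] LaurentSeries (MvPolynomial (TwIdx k m α) ℂ)) : Prop :=
  ∀ (i : Fin k) (ℓ : ℕ) (e : ℤ), (Φ (X (i, ℓ))).coeff e =
    if h : 0 ≤ e + ℓ * m ∧ (e + ℓ * m).toNat % m = α i then
      ((ℓ.factorial : ℂ)⁻¹ * ∏ j ∈ Finset.range ℓ, (((e : ℂ) + (j + 1) * m) / m)) •
        X (⟨(i, (e + ℓ * m).toNat), h.2⟩ : TwIdx k m α)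
    else 0

namespace IsTwistedJetExpansion

variable {k m : ℕ} {α : Fin k → ℕ}
  {Φ : MvPolynomial (Fin k × ℕ) ℂ →ₐ[ℂ] LaurentSeries (MvPolynomial (TwIdx k m α) ℂ)}

theorem map_smul_X_succ (hΦ : IsTwistedJetExpansion Φ) (i : Fin k) (ℓ : ℕ) :
    Φ (((ℓ : ℂ) + 1) • X (i, ℓ + 1)) = zDeriv ℂ m (Φ (X (i, ℓ))) := by
  ext1
  funext e
  have he : e + ((ℓ + 1 : ℕ) : ℤ) * m = e + m + ℓ * m := by push_cast; ring
  have hℓ : (ℓ : ℂ) + 1 ≠ 0 := Nat.cast_add_one_ne_zero ℓ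
  have hfactor (j : ℕ) :
      ((e : ℂ) + ((j + 1 : ℕ) + 1) * m) / m = ((e + m : ℤ) + (j + 1) * m) / m := by
    push_cast
    ring
  rw [coeff_map_smul, coeff_zDeriv, hΦ, hΦ]
  simp only [he]
  split_ifs with h
  · rw [smul_smul, smul_smul, Finset.prod_range_succ', Finset.prod_congr rfl fun j _ ↦ hfactor j,
      Nat.factorial_succ]
    congr 1
    push_cast
    field_simp
    ring
  · rw [smul_zero, smul_zero]

theorem dvd_sub_of_coeff_map_X_ne_zero (hΦ : IsTwistedJetExpansion Φ) {i : Fin k} {ℓ : ℕ} {e : ℤ}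
    (he : (Φ (X (i, ℓ))).coeff e ≠ 0) : (m : ℤ) ∣ e - α i := by
  rw [hΦ] at he
  split_ifs at he with h
  · have hα : (α i : ℤ) = e % m := by
      rw [← h.2, Int.natCast_mod, Int.toNat_of_nonneg h.1, Int.add_mul_emod_self_right]
    rw [hα]
    exact Int.dvd_self_sub_emod
  · exact absurd rfl he

theorem semiconj_zDeriv
    {T : Derivation ℂ (MvPolynomial (Fin k × ℕ) ℂ) (MvPolynomial (Fin k × ℕ) ℂ)}
    (hΦ : IsTwistedJetExpansion Φ) (hT : ∀ i ℓ, T (X (i, ℓ)) = ((ℓ : ℂ) + 1) • X (i, ℓ + 1)) :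
    Semiconj Φ T (zDeriv ℂ m) :=
  semiconj_zDeriv_of_forall_X fun i ↦ by rw [hT, hΦ.map_smul_X_succ]

theorem map_eq_scaleVar_map {ζ : ℂˣ} (hζ : IsPrimitiveRoot ζ m)
    {σ : MvPolynomial (Fin k × ℕ) ℂ →ₐ[ℂ] MvPolynomial (Fin k × ℕ) ℂ}
    (hΦ : IsTwistedJetExpansion Φ) (hσ : ∀ i ℓ, σ (X (i, ℓ)) = (ζ : ℂ) ^ α i • X (i, ℓ))
    (a : MvPolynomial (Fin k × ℕ) ℂ) : Φ (σ a) = scaleVar ζ (Φ a) := by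
  refine map_eq_scaleVar_map_of_forall_X (fun i ↦ ?_) a
  ext1
  funext e
  rw [hσ, coeff_map_smul, coeff_scaleVar]
  by_cases he : (Φ (X i)).coeff e = 0
  · rw [he, smul_zero, smul_zero]
  · rw [(zpow_eq_zpow_iff_dvd hζ).2 (hΦ.dvd_sub_of_coeff_map_X_ne_zero he)]
    rfl

theorem dvd_sub_of_coeff_map_ne_zero {ζ : ℂ} (hζ : IsPrimitiveRoot ζ m) (hm : m ≠ 0)
    {σ : MvPolynomial (Fin k × ℕ) ℂ →ₐ[ℂ] MvPolynomial (Fin k × ℕ) ℂ}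
    (hΦ : IsTwistedJetExpansion Φ) (hσ : ∀ i ℓ, σ (X (i, ℓ)) = ζ ^ α i • X (i, ℓ))
    {a : MvPolynomial (Fin k × ℕ) ℂ} {r : ℤ} (ha : σ a = ζ ^ r • a) {e : ℤ}
    (he : (Φ a).coeff e ≠ 0) : (m : ℤ) ∣ e - r := by
  lift ζ to ℂˣ using (hζ.ne_zero hm).isUnit
  have hζ' : IsPrimitiveRoot ζ m := IsPrimitiveRoot.coe_units_iff.1 hζ
  refine dvd_sub_of_coeff_ne_zero hζ' (fun e ↦ ?_) he
  rw [← hΦ.map_eq_scaleVar_map hζ' hσ, ha, coeff_map_smul, ← Units.val_zpow_eq_zpow_val,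
    Units.smul_def]

end IsTwistedJetExpansion

end Jets

/-- the twisted Borcherds identity for `ℂ[J^g 𝔸^k] = B_α` as a
`σ`-twisted module over the commutative vertex algebra `ℂ[J𝔸^k] = R_k`.  If
`σ(a) = ζ^r·a` and `σ(b) = ζ^{s'}·b`, then for all `μ, ν ∈ ℚ` with
`μ + r/m ∈ ℤ` and `ν + s'/m ∈ ℤ` (written `μ = u − r/m`, `ν = v − s'/m`, and
encoded by the integers `nμ = mμ`, `nν = mν`) and all `l ∈ ℤ`, one has in
`B_α`:
`Σ_{i≥0} C(μ,i)·(a_{(l+i)}b)^M_{(μ+ν−i)}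
  = Σ_{i≥0} (−1)^i·C(l,i)·(a^M_{(l+μ−i)}·b^M_{(ν+i)} + (−1)^{l+1}·b^M_{(l+ν−i)}·a^M_{(μ+i)})`,
with both sums having only finitely many nonzero terms. -/
theorem twisted_borcherds_identity_for_twisted_jets
    (k m : ℕ) (hk : 1 ≤ k) (hm : 1 ≤ m)
    (ζ : ℂ) (hζ : ζ = Complex.exp (2 * Real.pi * Complex.I / m))
    (α : Fin k → ℕ) (hα : ∀ i, α i < m)
    (T : Derivation ℂ (MvPolynomial (Fin k × ℕ) ℂ) (MvPolynomial (Fin k × ℕ) ℂ))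
    (hT : ∀ (i : Fin k) (ℓ : ℕ),
      T (X (i, ℓ)) = ((ℓ : ℂ) + 1) • X (i, ℓ + 1))
    (σ : MvPolynomial (Fin k × ℕ) ℂ ≃ₐ[ℂ] MvPolynomial (Fin k × ℕ) ℂ)
    (hσ : ∀ (i : Fin k) (ℓ : ℕ), σ (X (i, ℓ)) = ζ ^ (α i) • X (i, ℓ))
    (Φ : MvPolynomial (Fin k × ℕ) ℂ →ₐ[ℂ] LaurentSeries (MvPolynomial (TwIdx k m α) ℂ))
    (hΦ : ∀ (i : Fin k) (ℓ : ℕ) (e : ℤ),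
      (Φ (X (i, ℓ))).coeff e =
        if h : 0 ≤ e + ℓ * m ∧ (e + ℓ * m).toNat % m = α i then
          (((ℓ.factorial : ℂ))⁻¹ *
            ∏ j ∈ Finset.range ℓ, (((e : ℂ) + (j + 1) * m) / m)) •
            X (⟨(i, (e + ℓ * m).toNat), h.2⟩ : TwIdx k m α)
        else 0)
    (a b : MvPolynomial (Fin k × ℕ) ℂ) (r s' : ℤ)
    (ha : σ a = ζ ^ r • a) (hb : σ b = ζ ^ s' • b)
    (u v l : ℤ) :
    -- `nμ := m*u − r` and `nν := m*v − s'` encode `μ = u − r/m`, `ν = v − s'/m`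
    (Set.Finite (Function.support fun i : ℕ =>
      ((genBinom (((m : ℚ) * u - r) / m) i : ℚ) : ℂ) •
        twMode Φ (nProd T a (l + i) b) ((m * u - r) + (m * v - s') - m * i))) ∧
    (Set.Finite (Function.support fun i : ℕ =>
      ((-1 : ℂ) ^ i * ((genBinom (l : ℚ) i : ℚ) : ℂ)) •
        (twMode Φ a (m * l + (m * u - r) - m * i) * twMode Φ b ((m * v - s') + m * i)
          + (-1 : ℂ) ^ (l + 1) •
            (twMode Φ b (m * l + (m * v - s') - m * i) *
              twMode Φ a ((m * u - r) + m * i))))) ∧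
    (∑ᶠ i : ℕ, ((genBinom (((m : ℚ) * u - r) / m) i : ℚ) : ℂ) •
        twMode Φ (nProd T a (l + i) b) ((m * u - r) + (m * v - s') - m * i))
      = ∑ᶠ i : ℕ, ((-1 : ℂ) ^ i * ((genBinom (l : ℚ) i : ℚ) : ℂ)) •
          (twMode Φ a (m * l + (m * u - r) - m * i) * twMode Φ b ((m * v - s') + m * i)
            + (-1 : ℂ) ^ (l + 1) •
              (twMode Φ b (m * l + (m * v - s') - m * i) *
                twMode Φ a ((m * u - r) + m * i))) := by
  have hζm : IsPrimitiveRoot ζ m := hζ ▸ Complex.isPrimitiveRoot_exp m (by lia)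
  have hM : ∀ e, (Φ a).coeff e ≠ 0 → (m : ℤ) ∣ e + (m * u - r) := fun e he ↦ by
    have hr : (m : ℤ) ∣ e - r :=
      IsTwistedJetExpansion.dvd_sub_of_coeff_map_ne_zero (σ := σ) hζm (by lia) hΦ hσ ha he
    rw [add_sub_left_comm, add_comm]
    exact dvd_add hr (dvd_mul_right _ u)
  exact_mod_cast twisted_borcherds_identity_for_twisted_jets_general (by lia)
    (IsTwistedJetExpansion.semiconj_zDeriv hΦ hT) a b hM (m * v - s') l
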